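/- Suppose the family {r_θ}_{θ>0} satisfies Assumption 1 and additionally each r_θ is concave on [0,+∞). Suppose K is a polyhedral convex set having at least one vertex and f is concave and bounded below on K. Then Ω₁ = {(x,y,z) : (x,y) ∈ K, |x_i| ≤ z_i for all i} is a polyhedral convex set having at least one vertex. Let V be the vertex set of Ω₁ and, for θ > 0, let P̄_θ = {(x,y) : there exists z ∈ ℝⁿ such that (x,y,z) ∈ V is a global minimizer of F̄_{r_θ}(x,y,z) = f(x,y) + λ Σ_{i=1}^n r_θ(z_i) on Ω₁}. Then P̄_θ ≠ ∅ for every θ > 0, and there exists θ₀ > 0 such that P̄_θ ⊆ P for all θ ≥ θ₀. -/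

import Mathlib

open Filter Topology

/-- The number of nonzero components of `x`, as a real number. -/
noncomputable def zeroNorm {n : ℕ} (x : Fin n → ℝ) : ℝ :=
  ((Finset.univ.filter fun i => x i ≠ 0).card : ℝ)

/-- The step function: `s(t) = 1` for `t ≠ 0`, `s(0) = 0`. -/
noncomputable def stepFn (t : ℝ) : ℝ := if t = 0 then 0 else 1

/-- Convex subdifferential of a finite function `φ : ℝ → ℝ` at `t₀`. -/
def subdiffR (φ : ℝ → ℝ) (t₀ : ℝ) : Set ℝ :=
  {v | ∀ t, φ t ≥ φ t₀ + (t - t₀) * v}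

/-- The "DC subdifferential" `∂r(t) = {u - v : u ∈ ∂φ(t), v ∈ ∂ψ(t)}`. -/
def rSubdiff (φ ψ : ℝ → ℝ) (t : ℝ) : Set ℝ :=
  {μ | ∃ u ∈ subdiffR φ t, ∃ v ∈ subdiffR ψ t, μ = u - v}

/-- Assumption 1 on the family of approximations `r θ`, with DC decomposition
`r θ = φ θ - ψ θ`. -/
def Assumption1 (r φ ψ : ℝ → ℝ → ℝ) : Prop :=
  (∀ t, Tendsto (fun θ => r θ t) atTop (nhds (stepFn t))) ∧
  (∀ θ > (0 : ℝ), ∀ t, r θ (-t) = r θ t) ∧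
  (∀ θ > (0 : ℝ), MonotoneOn (r θ) (Set.Ici 0)) ∧
  (∀ θ > (0 : ℝ), ConvexOn ℝ Set.univ (φ θ) ∧ ConvexOn ℝ Set.univ (ψ θ) ∧
    ∀ t, r θ t = φ θ t - ψ θ t) ∧
  (∀ θ > (0 : ℝ), ∀ t : ℝ, ∀ μ ∈ rSubdiff (φ θ) (ψ θ) t, 0 ≤ t * μ) ∧
  (∀ a b : ℝ, a ≤ b → (0 : ℝ) ∉ Set.Icc a b → ∀ ε > (0 : ℝ), ∃ Θ : ℝ, ∀ θ ≥ Θ,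
    ∀ t ∈ Set.Icc a b, ∀ z ∈ rSubdiff (φ θ) (ψ θ) t, |z| ≤ ε)

/-- A polyhedral convex set: intersection of finitely many closed halfspaces. -/
def IsPolyhedral {E : Type*} [AddCommGroup E] [Module ℝ E] (S : Set E) : Prop :=
  ∃ (N : ℕ) (A : Fin N → E →ₗ[ℝ] ℝ) (c : Fin N → ℝ), S = {p | ∀ j, A j p ≤ c j}

/-!
A concave function bounded below on a polyhedron cannot decrease along a recession direction, and
at an interior point of a segment it is at least the smaller of its endpoint values. So from a point
that is not a vertex one can move, keeping the active constraints active, until a further constraint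
becomes active, without increasing the function. Iterating, the function attains its minimum at one
of the finitely many vertices.

At a vertex of `Ω₁` the bound `|x| ≤ z` is an equality, so every point of `P̄_θ` minimizes
`f + λ ∑ r_θ(|x_i|)` over `K` and lies in a finite set that does not depend on `θ`. These objectives
converge pointwise to `f + λ‖x‖₀`, so a point of that finite set which is not in `P` is eventually
beaten by a fixed competitor.
-/

section ConcaveOnRay

variable {E : Type*} [AddCommGroup E] [Module ℝ E] {S : Set E} {G : E → ℝ} {p d : E}

theorem le_add_of_concaveOn_of_bddBelow_of_ray (hG : ConcaveOn ℝ S G) (hbdd : BddBelow (G '' S))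
    (hray : ∀ t : ℝ, 0 ≤ t → p + t • d ∈ S) : G p ≤ G (p + d) := by
  obtain ⟨m, hm⟩ := hbdd
  have hp : p ∈ S := by simpa using hray 0 le_rfl
  have hbound : ∀ s ∈ Set.Ioc (0 : ℝ) 1, (1 - s) * G p + s * m ≤ G (p + d) := by
    rintro s ⟨hs0, hs1⟩
    have hfar : p + s⁻¹ • d ∈ S := hray _ (by positivity)
    calc (1 - s) * G p + s * m ≤ (1 - s) * G p + s * G (p + s⁻¹ • d) := by
          gcongr
          exact hm (Set.mem_image_of_mem G hfar)
      _ ≤ G ((1 - s) • p + s • (p + s⁻¹ • d)) :=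
          hG.2 hp hfar (sub_nonneg.2 hs1) hs0.le (sub_add_cancel 1 s)
      _ = G (p + d) := by
          rw [smul_add, smul_inv_smul₀ hs0.ne', ← add_assoc, ← add_smul, sub_add_cancel, one_smul]
  have hlim : Tendsto (fun s : ℝ => (1 - s) * G p + s * m) (𝓝[>] 0) (𝓝 (G p)) := by
    have hcont : Continuous fun s : ℝ => (1 - s) * G p + s * m := by fun_prop
    simpa using (hcont.tendsto 0).mono_left nhdsWithin_le_nhds
  exact le_of_tendsto hlim (mem_of_superset (Ioc_mem_nhdsGT zero_lt_one) hbound)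

end ConcaveOnRay

section Polyhedron

variable {E ι : Type*} [AddCommGroup E] [Module ℝ E]

/-- The polyhedron `{p | A p ≤ c}`, with constraints indexed by an arbitrary type so that systems of
inequalities can be described by their natural index type. -/
def polyhedron (A : ι → E →ₗ[ℝ] ℝ) (c : ι → ℝ) : Set E := {p | ∀ j, A j p ≤ c j}

/-- The indices of the constraints of `polyhedron A c` that are tight at `p`. -/
def activeSet (A : ι → E →ₗ[ℝ] ℝ) (c : ι → ℝ) (p : E) : Set ι := {j | A j p = c j}

variable {A : ι → E →ₗ[ℝ] ℝ} {c : ι → ℝ} {p d : E}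

theorem map_eq_of_mem_activeSet_of_mem_openSegment {x y : E} (hx : x ∈ polyhedron A c)
    (hy : y ∈ polyhedron A c) (hp : p ∈ openSegment ℝ x y) {j : ι} (hj : j ∈ activeSet A c p) :
    A j x = A j y := by
  obtain ⟨a, b, ha, hb, hab, rfl⟩ := hp
  have hsum : a * A j x + b * A j y = a * c j + b * c j := by
    simpa [activeSet, ← add_mul, hab] using hj
  have hxj := mul_le_mul_of_nonneg_left (hx j) ha.le
  have hyj := mul_le_mul_of_nonneg_left (hy j) hb.le
  have hx_eq : A j x = c j := mul_left_cancel₀ ha.ne' (by linarith)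
  have hy_eq : A j y = c j := mul_left_cancel₀ hb.ne' (by linarith)
  rw [hx_eq, hy_eq]

variable [Finite ι]

theorem eventually_add_smul_mem_polyhedron (hp : p ∈ polyhedron A c)
    (hd : ∀ j ∈ activeSet A c p, A j d = 0) : ∀ᶠ t in 𝓝 (0 : ℝ), p + t • d ∈ polyhedron A c := by
  refine eventually_all.2 fun j => ?_
  simp only [map_add, map_smul, smul_eq_mul]
  rcases (hp j).lt_or_eq with hlt | hactive
  · have hcont : Continuous fun t : ℝ => A j p + t * A j d := by fun_prop
    filter_upwards [(hcont.tendsto 0).eventually_lt_const (by simpa using hlt)] with t ht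
    exact ht.le
  · simp [hd j hactive, hactive]

theorem mem_extremePoints_polyhedron_iff :
    p ∈ (polyhedron A c).extremePoints ℝ ↔
      p ∈ polyhedron A c ∧ ∀ d, (∀ j ∈ activeSet A c p, A j d = 0) → d = 0 := by
  constructor
  · refine fun hext => ⟨hext.1, fun d hd => ?_⟩
    have hmem := eventually_add_smul_mem_polyhedron hext.1 hd
    have hmem_neg := eventually_add_smul_mem_polyhedron (d := -d) hext.1 fun j hj => by
      rw [map_neg, hd j hj, neg_zero]
    obtain ⟨ε, ⟨hadd, hsub⟩, hε⟩ :=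
      (((hmem.and hmem_neg).filter_mono nhdsWithin_le_nhds).and
        (self_mem_nhdsWithin (s := Set.Ioi 0))).exists
    have hmid : p ∈ openSegment ℝ (p + ε • d) (p + ε • -d) :=
      ⟨1 / 2, 1 / 2, by norm_num, by norm_num, by norm_num, by module⟩
    have hεd : ε • d = 0 := add_eq_left.1 (hext.2 hadd hsub hmid)
    exact (smul_eq_zero.1 hεd).resolve_left (ne_of_gt hε)
  · rintro ⟨hp, hker⟩
    refine ⟨hp, fun x hx y hy hxy => ?_⟩
    obtain rfl : x = y := sub_eq_zero.1 <| hker _ fun j hj => by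
      rw [map_sub, map_eq_of_mem_activeSet_of_mem_openSegment hx hy hxy hj, sub_self]
    rw [openSegment_same] at hxy
    exact hxy.symm

theorem finite_extremePoints_polyhedron (A : ι → E →ₗ[ℝ] ℝ) (c : ι → ℝ) :
    ((polyhedron A c).extremePoints ℝ).Finite := by
  refine Set.Finite.of_injOn (Set.mapsTo_univ (activeSet A c) _) ?_ Set.finite_univ
  intro p hp q _ hpq
  refine sub_eq_zero.1 ((mem_extremePoints_polyhedron_iff.1 hp).2 _ fun j hj => ?_)
  have hjq : j ∈ activeSet A c q := hpq ▸ hj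
  rw [map_sub, sub_eq_zero]
  exact Eq.trans hj (Eq.symm hjq)

theorem exists_add_smul_mem_polyhedron_activeSet_ssubset (hp : p ∈ polyhedron A c)
    (hd : ∀ j ∈ activeSet A c p, A j d = 0) (hpos : ∃ j, 0 < A j d) :
    ∃ b > (0 : ℝ), p + b • d ∈ polyhedron A c ∧
      activeSet A c p ⊂ activeSet A c (p + b • d) := by
  -- The step length is the smallest ratio at which a constraint increasing along `d` becomes tight.
  obtain ⟨k, hk, hmin⟩ := Set.exists_min_image {j | 0 < A j d} (fun j => (c j - A j p) / A j d)
    (Set.toFinite _) hpos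
  have hk_inactive : k ∉ activeSet A c p := fun hact => (ne_of_gt hk) (hd k hact)
  have hgap : 0 < c k - A k p := sub_pos.2 ((hp k).lt_of_ne hk_inactive)
  set b := (c k - A k p) / A k d with hb_def
  have hb : 0 < b := div_pos hgap hk
  have hmap : ∀ j, A j (p + b • d) = A j p + b * A j d := fun j => by
    rw [map_add, map_smul, smul_eq_mul]
  refine ⟨b, hb, fun j => ?_, fun j hj => ?_, fun hsub => hk_inactive (hsub ?_)⟩
  · rw [hmap]
    rcases le_or_gt (A j d) 0 with hdecr | hincr
    · linarith [hp j, mul_nonpos_of_nonneg_of_nonpos hb.le hdecr]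
    · linarith [(le_div_iff₀ hincr).1 (hmin j hincr)]
  · change A j (p + b • d) = c j
    rw [hmap, hd j hj, mul_zero, add_zero, hj]
  · change A k (p + b • d) = c k
    rw [hmap, hb_def, div_mul_cancel₀ _ (ne_of_gt hk), add_sub_cancel]

section Concave

variable {G : E → ℝ}

theorem exists_le_activeSet_ssubset (hG : ConcaveOn ℝ (polyhedron A c) G)
    (hbdd : BddBelow (G '' polyhedron A c)) (hp : p ∈ polyhedron A c)
    (hd : ∀ j ∈ activeSet A c p, A j d = 0) (hpos : ∃ j, 0 < A j d) :
    ∃ q ∈ polyhedron A c, G q ≤ G p ∧ activeSet A c p ⊂ activeSet A c q := by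
  obtain ⟨b, hb, hq, hactive⟩ := exists_add_smul_mem_polyhedron_activeSet_ssubset hp hd hpos
  by_cases hneg : ∃ j, 0 < A j (-d)
  · obtain ⟨b', hb', hq', hactive'⟩ := exists_add_smul_mem_polyhedron_activeSet_ssubset hp
      (fun j hj => by rw [map_neg, hd j hj, neg_zero]) hneg
    have hp_seg : p ∈ segment ℝ (p + b • d) (p + b' • -d) := by
      refine ⟨b' / (b + b'), b / (b + b'), by positivity, by positivity, by field_simp; ring, ?_⟩
      match_scalars <;> field_simp <;> ring
    rcases min_le_iff.1 (hG.ge_on_segment hq hq' hp_seg) with hle | hle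
    · exact ⟨_, hq, hle, hactive⟩
    · exact ⟨_, hq', hle, hactive'⟩
  · refine ⟨p + b • d, hq, ?_, hactive⟩
    -- `-d` is a recession direction, along which `G` cannot decrease on the way back to `p`.
    push Not at hneg
    have hray : ∀ t : ℝ, 0 ≤ t → (p + b • d) + t • (b • -d) ∈ polyhedron A c := fun t ht j => by
      have hstep := mul_nonpos_of_nonneg_of_nonpos (mul_nonneg ht hb.le) (hneg j)
      rw [map_add, smul_smul, map_smul, smul_eq_mul]
      linarith [hq j]
    simpa using le_add_of_concaveOn_of_bddBelow_of_ray hG hbdd hray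

theorem exists_extremePoint_polyhedron_le (hvert : ((polyhedron A c).extremePoints ℝ).Nonempty)
    (hG : ConcaveOn ℝ (polyhedron A c) G) (hbdd : BddBelow (G '' polyhedron A c))
    (hp : p ∈ polyhedron A c) : ∃ v ∈ (polyhedron A c).extremePoints ℝ, G v ≤ G p := by
  obtain ⟨v₀, hv₀⟩ := hvert
  induction hact : activeSet A c p using WellFoundedGT.induction generalizing p with
  | _ s ih =>
    subst hact
    by_cases hext : p ∈ (polyhedron A c).extremePoints ℝ
    · exact ⟨p, hext, le_rfl⟩
    obtain ⟨d, hd, hd0⟩ : ∃ d, (∀ j ∈ activeSet A c p, A j d = 0) ∧ d ≠ 0 := by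
      simpa [mem_extremePoints_polyhedron_iff, hp] using hext
    obtain ⟨j, hj⟩ : ∃ j, A j d ≠ 0 := by
      by_contra! hker
      exact hd0 ((mem_extremePoints_polyhedron_iff.1 hv₀).2 d fun j _ => hker j)
    obtain ⟨q, hq, hqp, hlt⟩ :
        ∃ q ∈ polyhedron A c, G q ≤ G p ∧ activeSet A c p ⊂ activeSet A c q := by
      rcases hj.lt_or_gt with hneg | hpos
      · exact exists_le_activeSet_ssubset (d := -d) hG hbdd hp
          (fun i hi => by rw [map_neg, hd i hi, neg_zero]) ⟨j, by simpa using hneg⟩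
      · exact exists_le_activeSet_ssubset hG hbdd hp hd ⟨j, hpos⟩
    obtain ⟨v, hv, hvq⟩ := ih _ hlt hq rfl
    exact ⟨v, hv, hvq.trans hqp⟩

end Concave

end Polyhedron

namespace IsPolyhedral

variable {E F : Type*} [AddCommGroup E] [Module ℝ E] [AddCommGroup F] [Module ℝ F] {S T : Set E}

theorem of_polyhedron {ι : Type*} [Finite ι] (A : ι → E →ₗ[ℝ] ℝ) (c : ι → ℝ) :
    IsPolyhedral (polyhedron A c) := by
  let e := Finite.equivFin ι
  refine ⟨Nat.card ι, A ∘ e.symm, c ∘ e.symm, Set.ext fun p => ?_⟩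
  exact e.forall_congr_left

theorem inter (hS : IsPolyhedral S) (hT : IsPolyhedral T) : IsPolyhedral (S ∩ T) := by
  obtain ⟨M, A, a, rfl⟩ := hS
  obtain ⟨N, B, b, rfl⟩ := hT
  convert of_polyhedron (Sum.elim A B) (Sum.elim a b)
  ext p
  simp [polyhedron]

theorem preimage (hS : IsPolyhedral S) (L : F →ₗ[ℝ] E) : IsPolyhedral (L ⁻¹' S) := by
  obtain ⟨N, A, c, rfl⟩ := hS
  exact ⟨N, fun j => A j ∘ₗ L, c, rfl⟩

protected theorem convex (hS : IsPolyhedral S) : Convex ℝ S := by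
  obtain ⟨N, A, c, rfl⟩ := hS
  rw [Set.ofPred_forall]
  exact convex_iInter fun j => convex_halfSpace_le (A j).isLinear (c j)

theorem finite_extremePoints (hS : IsPolyhedral S) : (S.extremePoints ℝ).Finite := by
  obtain ⟨N, A, c, rfl⟩ := hS
  exact finite_extremePoints_polyhedron A c

theorem exists_extremePoint_isMinOn {G : E → ℝ} (hS : IsPolyhedral S)
    (hvert : (S.extremePoints ℝ).Nonempty) (hG : ConcaveOn ℝ S G) (hbdd : BddBelow (G '' S)) :
    ∃ v ∈ S.extremePoints ℝ, IsMinOn G S v := by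
  obtain ⟨v, hv, hmin⟩ := Set.exists_min_image _ G hS.finite_extremePoints hvert
  obtain ⟨N, A, c, rfl⟩ := hS
  refine ⟨v, hv, isMinOn_iff.2 fun q hq => ?_⟩
  obtain ⟨w, hw, hwq⟩ := exists_extremePoint_polyhedron_le hvert hG hbdd hq
  exact (hmin w hw).trans hwq

end IsPolyhedral

section Epigraph

/-- The epigraph over `K` of a function with values in an ordered space. For `φ (x, y) = |x|`
(componentwise) this is the set `Ω₁`. -/
def epigraphOn {E F : Type*} [LE F] (K : Set E) (φ : E → F) : Set (E × F) :=
  {q | q.1 ∈ K ∧ φ q.1 ≤ q.2}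

section ExtremePoints

variable {E F : Type*} [AddCommGroup E] [Module ℝ E] [AddCommGroup F] [PartialOrder F]
  [IsOrderedAddMonoid F] [Module ℝ F] {K : Set E} {φ : E → F} {p : E} {z : F}

theorem eq_of_mem_extremePoints_epigraphOn (hext : (p, z) ∈ (epigraphOn K φ).extremePoints ℝ) :
    z = φ p := by
  -- `(p, z)` is the midpoint of `(p, φ p)` and its reflection `(p, 2 z - φ p)`.
  have hbottom : (p, φ p) ∈ epigraphOn K φ := ⟨hext.1.1, le_rfl⟩
  have htop : (p, z + (z - φ p)) ∈ epigraphOn K φ :=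
    ⟨hext.1.1, hext.1.2.trans (le_add_of_nonneg_right (sub_nonneg.2 hext.1.2))⟩
  have hmid : (p, z) ∈ openSegment ℝ (p, φ p) (p, z + (z - φ p)) := by
    refine ⟨1 / 2, 1 / 2, by norm_num, by norm_num, by norm_num, Prod.ext ?_ ?_⟩
    · change (1 / 2 : ℝ) • p + (1 / 2 : ℝ) • p = p
      module
    · change (1 / 2 : ℝ) • φ p + (1 / 2 : ℝ) • (z + (z - φ p)) = z
      module
  exact (congrArg Prod.snd (hext.2 hbottom htop hmid)).symm

theorem mk_mem_extremePoints_epigraphOn [PosSMulMono ℝ F] (hp : p ∈ K.extremePoints ℝ) :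
    (p, φ p) ∈ (epigraphOn K φ).extremePoints ℝ := by
  refine ⟨⟨hp.1, le_rfl⟩, ?_⟩
  rintro ⟨p₁, z₁⟩ ⟨hp₁, hz₁⟩ ⟨p₂, z₂⟩ ⟨hp₂, hz₂⟩ ⟨a, b, ha, hb, hab, hcomb⟩
  obtain ⟨hcomb_fst, hcomb_snd⟩ := Prod.mk.inj hcomb
  obtain ⟨rfl, rfl⟩ := (mem_extremePoints.1 hp).2 p₁ hp₁ p₂ hp₂ ⟨a, b, ha, hb, hab, hcomb_fst⟩
  have hz₁_le : a • z₁ ≤ a • φ p₂ := by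
    refine le_of_add_le_add_right (a := b • φ p₂) ?_
    calc a • z₁ + b • φ p₂ ≤ a • z₁ + b • z₂ := by gcongr
      _ = a • φ p₂ + b • φ p₂ := by rw [← add_smul, hab, one_smul]; exact hcomb_snd
  exact congrArg (Prod.mk p₂) (((smul_le_smul_iff_of_pos_left ha).1 hz₁_le).antisymm hz₁)

end ExtremePoints

theorem IsPolyhedral.epigraphOn_abs {E ι : Type*} [AddCommGroup E] [Module ℝ E] [Finite ι]
    {K : Set E} (hK : IsPolyhedral K) (L : E →ₗ[ℝ] ι → ℝ) :
    IsPolyhedral (epigraphOn K fun p => |L p|) := by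
  let x : ι → E × (ι → ℝ) →ₗ[ℝ] ℝ := fun i => LinearMap.proj i ∘ₗ L ∘ₗ LinearMap.fst ℝ E (ι → ℝ)
  let z : ι → E × (ι → ℝ) →ₗ[ℝ] ℝ := fun i => LinearMap.proj i ∘ₗ LinearMap.snd ℝ E (ι → ℝ)
  convert (hK.preimage (LinearMap.fst ℝ E (ι → ℝ))).inter
    ((of_polyhedron (fun i => x i - z i) 0).inter (of_polyhedron (fun i => -x i - z i) 0))
  ext q
  simp [epigraphOn, polyhedron, x, z, abs_le', Pi.le_def]

end Epigraph

section LiftedObjective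

variable {E ι : Type*} [Fintype ι]

/-- The objective `F̄_ρ(p, z) = f(p) + λ ∑ ρ(z_i)` of the lifted problem. -/
def liftedObjective (f : E → ℝ) (lam : ℝ) (ρ : ℝ → ℝ) (q : E × (ι → ℝ)) : ℝ :=
  f q.1 + lam * ∑ i, ρ (q.2 i)

variable {K : Set E} {f : E → ℝ} {lam : ℝ} {ρ : ℝ → ℝ}

theorem concaveOn_liftedObjective [AddCommGroup E] [Module ℝ E] (hf : ConcaveOn ℝ K f)
    (hlam : 0 ≤ lam) (hρ : ConcaveOn ℝ (Set.Ici 0) ρ) :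
    ConcaveOn ℝ (K ×ˢ Set.Ici (0 : ι → ℝ)) (liftedObjective f lam ρ) := by
  refine ⟨hf.1.prod (convex_Ici 0), fun p hp q hq a b ha hb hab => ?_⟩
  have hsum : a * ∑ i, ρ (p.2 i) + b * ∑ i, ρ (q.2 i) ≤ ∑ i, ρ ((a • p + b • q).2 i) := by
    rw [Finset.mul_sum, Finset.mul_sum, ← Finset.sum_add_distrib]
    exact Finset.sum_le_sum fun i _ => hρ.2 (hp.2 i) (hq.2 i) ha hb hab
  calc a • liftedObjective f lam ρ p + b • liftedObjective f lam ρ q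
      = a • f p.1 + b • f q.1 + lam * (a * ∑ i, ρ (p.2 i) + b * ∑ i, ρ (q.2 i)) := by
        simp only [liftedObjective, smul_eq_mul]
        ring
    _ ≤ liftedObjective f lam ρ (a • p + b • q) :=
        add_le_add (hf.2 hp.1 hq.1 ha hb hab) (mul_le_mul_of_nonneg_left hsum hlam)

theorem bddBelow_image_liftedObjective (hf : BddBelow (f '' K)) (hlam : 0 ≤ lam)
    (hρ : BddBelow (ρ '' Set.Ici 0)) :
    BddBelow (liftedObjective f lam ρ '' (K ×ˢ Set.Ici (0 : ι → ℝ))) := by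
  obtain ⟨m, hm⟩ := hf
  obtain ⟨m', hm'⟩ := hρ
  refine ⟨m + lam * ∑ _i : ι, m', Set.forall_mem_image.2 fun q hq => ?_⟩
  exact add_le_add (hm (Set.mem_image_of_mem f hq.1)) <| mul_le_mul_of_nonneg_left
    (Finset.sum_le_sum fun i _ => hm' (Set.mem_image_of_mem ρ (hq.2 i))) hlam

end LiftedObjective

section PointwiseLimit

theorem eventually_isMinOn_of_tendsto {α β γ : Type*} [LinearOrder γ] [TopologicalSpace γ]
    [OrderClosedTopology γ] {l : Filter α} {Φ : α → β → γ} {Ψ : β → γ} {V K : Set β}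
    (hV : V.Finite) (hVK : V ⊆ K) (hlim : ∀ p ∈ K, Tendsto (fun θ => Φ θ p) l (𝓝 (Ψ p))) :
    ∀ᶠ θ in l, ∀ v ∈ V, IsMinOn (Φ θ) K v → IsMinOn Ψ K v := by
  refine hV.eventually_all.2 fun v hv => ?_
  by_cases hmin : IsMinOn Ψ K v
  · exact .of_forall fun _ _ => hmin
  obtain ⟨q, hq, hlt⟩ : ∃ q ∈ K, Ψ q < Ψ v := by simpa [isMinOn_iff] using hmin
  filter_upwards [(hlim q hq).eventually_lt (hlim v (hVK hv)) hlt] with θ hθ hminθ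
  exact absurd (isMinOn_iff.1 hminθ q hq) hθ.not_ge

variable {n : ℕ}

theorem zeroNorm_eq_sum_stepFn (x : Fin n → ℝ) : zeroNorm x = ∑ i, stepFn (x i) := by
  simp only [zeroNorm, stepFn, Finset.card_filter, Nat.cast_sum]
  exact Finset.sum_congr rfl fun i _ => by split_ifs <;> simp_all

theorem stepFn_abs (t : ℝ) : stepFn |t| = stepFn t := by
  simp only [stepFn, abs_eq_zero]

theorem tendsto_sum_abs_zeroNorm {α : Type*} {l : Filter α} {r : α → ℝ → ℝ}
    (hr : ∀ t, Tendsto (fun θ => r θ t) l (𝓝 (stepFn t))) (x : Fin n → ℝ) :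
    Tendsto (fun θ => ∑ i, r θ |x i|) l (𝓝 (zeroNorm x)) := by
  rw [zeroNorm_eq_sum_stepFn]
  exact tendsto_finsetSum _ fun i _ => stepFn_abs (x i) ▸ hr |x i|

end PointwiseLimit

section VertexSolutions

variable {n : ℕ} {E : Type*} [AddCommGroup E] [Module ℝ E]

/-- The global minimizers over `K` of `f + λ ‖L ·‖₀`. The set `P` is the case `L (x, y) = x`. -/
def l0Solutions (f : E → ℝ) (lam : ℝ) (L : E →ₗ[ℝ] Fin n → ℝ) (K : Set E) : Set E :=
  {p | p ∈ K ∧ IsMinOn (fun q => f q + lam * zeroNorm (L q)) K p}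

/-- The first components of the vertices of `{(p, z) | p ∈ K, |L p| ≤ z}` that minimize the lifted
objective there. The set `P̄_θ` is the case `L (x, y) = x`, `ρ = r_θ`. -/
def vertexSolutions (f : E → ℝ) (lam : ℝ) (ρ : ℝ → ℝ) (L : E →ₗ[ℝ] Fin n → ℝ) (K : Set E) :
    Set E :=
  {p | ∃ z, (p, z) ∈ (epigraphOn K fun q => |L q|).extremePoints ℝ ∧
    IsMinOn (liftedObjective f lam ρ) (epigraphOn K fun q => |L q|) (p, z)}

variable {K : Set E} {f : E → ℝ} {lam : ℝ} {L : E →ₗ[ℝ] Fin n → ℝ}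

theorem vertexSolutions_nonempty {ρ : ℝ → ℝ} (hK : IsPolyhedral K)
    (hvert : (K.extremePoints ℝ).Nonempty) (hf : ConcaveOn ℝ K f) (hfbdd : BddBelow (f '' K))
    (hlam : 0 ≤ lam) (hρ : ConcaveOn ℝ (Set.Ici 0) ρ) (hρbdd : BddBelow (ρ '' Set.Ici 0)) :
    (vertexSolutions f lam ρ L K).Nonempty := by
  have hΩ : IsPolyhedral (epigraphOn K fun q => |L q|) := hK.epigraphOn_abs L
  have hsub : epigraphOn K (fun q => |L q|) ⊆ K ×ˢ Set.Ici 0 :=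
    fun q hq => ⟨hq.1, (abs_nonneg _).trans hq.2⟩
  obtain ⟨v, hv⟩ := hvert
  obtain ⟨⟨p, z⟩, hext, hmin⟩ := hΩ.exists_extremePoint_isMinOn
    ⟨_, mk_mem_extremePoints_epigraphOn hv⟩
    ((concaveOn_liftedObjective hf hlam hρ).subset hsub hΩ.convex)
    ((bddBelow_image_liftedObjective hfbdd hlam hρbdd).mono (Set.image_mono hsub))
  exact ⟨p, z, hext, hmin⟩

theorem isMinOn_of_mem_vertexSolutions {ρ : ℝ → ℝ} {p : E}
    (hp : p ∈ vertexSolutions f lam ρ L K) :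
    IsMinOn (fun q => f q + lam * ∑ i, ρ |L q i|) K p := by
  obtain ⟨z, hext, hmin⟩ := hp
  obtain rfl := eq_of_mem_extremePoints_epigraphOn hext
  exact isMinOn_iff.2 fun q hq => isMinOn_iff.1 hmin (q, |L q|) ⟨hq, le_rfl⟩

theorem eventually_vertexSolutions_subset_l0Solutions {α : Type*} {l : Filter α} {r : α → ℝ → ℝ}
    (hK : IsPolyhedral K) (hr : ∀ t, Tendsto (fun θ => r θ t) l (𝓝 (stepFn t))) :
    ∀ᶠ θ in l, vertexSolutions f lam (r θ) L K ⊆ l0Solutions f lam L K := by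
  have hfin := (hK.epigraphOn_abs L).finite_extremePoints.image Prod.fst
  have hVK : Prod.fst '' (epigraphOn K fun q => |L q|).extremePoints ℝ ⊆ K :=
    Set.image_subset_iff.2 fun v hv => hv.1.1
  have hlim (q : E) (_ : q ∈ K) : Tendsto (fun θ => f q + lam * ∑ i, r θ |L q i|) l
      (𝓝 (f q + lam * zeroNorm (L q))) :=
    ((tendsto_sum_abs_zeroNorm hr (L q)).const_mul lam).const_add (f q)
  filter_upwards [eventually_isMinOn_of_tendsto hfin hVK hlim] with θ hθ p hp
  have hpV : p ∈ Prod.fst '' (epigraphOn K fun q => |L q|).extremePoints ℝ :=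
    hp.imp' (p, ·) fun _ hz => ⟨hz.1, rfl⟩
  exact ⟨hVK hpV, hθ p hpV (isMinOn_of_mem_vertexSolutions hp)⟩

end VertexSolutions

theorem stmt_5_general {n : ℕ} {E : Type*} [AddCommGroup E] [Module ℝ E] {K : Set E}
    (hK : IsPolyhedral K) (hvert : (K.extremePoints ℝ).Nonempty)
    {f : E → ℝ} (hf : ConcaveOn ℝ K f) (hfbdd : BddBelow (f '' K))
    (L : E →ₗ[ℝ] Fin n → ℝ) {lam : ℝ} (hlam : 0 ≤ lam) {r : ℝ → ℝ → ℝ}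
    (hlim : ∀ t, Tendsto (fun θ => r θ t) atTop (𝓝 (stepFn t)))
    (hmono : ∀ θ > 0, MonotoneOn (r θ) (Set.Ici 0))
    (hconc : ∀ θ > 0, ConcaveOn ℝ (Set.Ici 0) (r θ)) :
    IsPolyhedral (epigraphOn K fun p => |L p|) ∧
      ((epigraphOn K fun p => |L p|).extremePoints ℝ).Nonempty ∧
      (∀ θ > 0, (vertexSolutions f lam (r θ) L K).Nonempty) ∧
      ∃ θ₀ > 0, ∀ θ ≥ θ₀, vertexSolutions f lam (r θ) L K ⊆ l0Solutions f lam L K := by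
  refine ⟨hK.epigraphOn_abs L, ?_, fun θ hθ => ?_, ?_⟩
  · obtain ⟨v, hv⟩ := hvert
    exact ⟨_, mk_mem_extremePoints_epigraphOn hv⟩
  · have hbdd : BddBelow (r θ '' Set.Ici 0) :=
      (hmono θ hθ).map_bddBelow subset_rfl ⟨0, fun _ ht => ht, Set.self_mem_Ici⟩
    exact vertexSolutions_nonempty hK hvert hf hfbdd hlam (hconc θ hθ) hbdd
  · obtain ⟨T, hT⟩ := eventually_atTop.1
      (eventually_vertexSolutions_subset_l0Solutions (f := f) (lam := lam) (L := L) hK hlim)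
    exact ⟨max T 1, by positivity, fun θ hθ => hT θ (le_of_max_le_left hθ)⟩

/-- Corollary 1: if each `r_θ` is concave on `[0,∞)`, `K` is a polyhedral
convex set with a vertex, and `f` is concave and bounded below on `K`, then `Ω₁` is
polyhedral with a vertex, the vertex solutions `P̄_θ` are nonempty, and for `θ` large
they are global solutions of the ℓ0-problem. -/
theorem stmt_5 {n m : ℕ}
    (K : Set ((Fin n → ℝ) × (Fin m → ℝ))) (hK : Convex ℝ K)
    (g h : (Fin n → ℝ) × (Fin m → ℝ) → ℝ)
    (hg : ConvexOn ℝ Set.univ g) (hh : ConvexOn ℝ Set.univ h)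
    (f : (Fin n → ℝ) × (Fin m → ℝ) → ℝ) (hf : ∀ p, f p = g p - h p)
    (lam : ℝ) (hlam : 0 < lam)
    (r φ ψ : ℝ → ℝ → ℝ) (hA : Assumption1 r φ ψ)
    (hconc : ∀ θ > (0 : ℝ), ConcaveOn ℝ (Set.Ici 0) (r θ))
    (hKpoly : IsPolyhedral K) (hKvert : (K.extremePoints ℝ).Nonempty)
    (hfconc : ConcaveOn ℝ K f) (hfbdd : ∃ c, ∀ p ∈ K, c ≤ f p)
    (Ω₁ : Set (((Fin n → ℝ) × (Fin m → ℝ)) × (Fin n → ℝ)))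
    (hΩ : Ω₁ = {pz | pz.1 ∈ K ∧ ∀ i, |pz.1.1 i| ≤ pz.2 i})
    (P : Set ((Fin n → ℝ) × (Fin m → ℝ)))
    (hP : P = {p | p ∈ K ∧ ∀ q ∈ K,
      f p + lam * zeroNorm p.1 ≤ f q + lam * zeroNorm q.1})
    (Pbar : ℝ → Set ((Fin n → ℝ) × (Fin m → ℝ)))
    (hPbar : ∀ θ, Pbar θ = {p | ∃ z : Fin n → ℝ,
      (p, z) ∈ Ω₁.extremePoints ℝ ∧
      ∀ qz ∈ Ω₁, f p + lam * ∑ i, r θ (z i) ≤ f qz.1 + lam * ∑ i, r θ (qz.2 i)}) :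
    IsPolyhedral Ω₁ ∧ (Ω₁.extremePoints ℝ).Nonempty ∧
    (∀ θ > (0 : ℝ), (Pbar θ).Nonempty) ∧
    ∃ θ₀ > (0 : ℝ), ∀ θ ≥ θ₀, Pbar θ ⊆ P := by
  subst hΩ hP
  obtain rfl := funext hPbar
  exact stmt_5_general hKpoly hKvert hfconc (hfbdd.imp fun _ hc => Set.forall_mem_image.2 hc)
    (LinearMap.fst ℝ _ _) hlam.le hA.1 hA.2.2.1 hconc
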